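/- arXiv:1603.01986 — 3 statements merged into one kernel-verified Lean document; each statement's English description precedes it below -/
import Mathlib

section
/- For every natural number n ≥ 1 and every real x, the recurrence (3n-1)·x·p_{n-1}(x) = 2n·q_n(x) + (2n-1)·q_{n-1}(x) holds as an identity of polynomials. -/
open MeasureTheory intervalIntegral

/-- The Pochhammer symbol (rising factorial) `(a)_m = a(a+1)⋯(a+m-1)` over `ℝ`. -/
noncomputable def poch (a : ℝ) (m : ℕ) : ℝ := (ascPochhammer ℝ m).eval a

/-- The polynomial `p_n(x) = ∑_{k=0}^n (n choose k) ((k/2+1)_n / n!) (-1)^{n-k} x^k`. -/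
noncomputable def pAlp (n : ℕ) (x : ℝ) : ℝ :=
  ∑ k ∈ Finset.range (n + 1),
    (n.choose k : ℝ) * (poch ((k : ℝ) / 2 + 1) n / (n.factorial : ℝ)) * (-1) ^ (n - k) * x ^ k
/-- The polynomial `q_n(x) = ∑_{k=0}^n (n choose k) (((k+1)/2)_n / n!) (-1)^{n-k} x^k`. -/
noncomputable def qAlp (n : ℕ) (x : ℝ) : ℝ :=
  ∑ k ∈ Finset.range (n + 1),
    (n.choose k : ℝ) * (poch (((k : ℝ) + 1) / 2) n / (n.factorial : ℝ)) * (-1) ^ (n - k) * x ^ k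

theorem poch_succ_aux (a : ℝ) (m : ℕ) : poch a (m + 1) = poch a m * (a + m) := by
  simp [poch, ascPochhammer_succ_right]

/-- Recurrence `(3n-1) x p_{n-1}(x) = 2n q_n(x) + (2n-1) q_{n-1}(x)` for `n ≥ 1`. -/
theorem rec_x_pAlp (n : ℕ) (hn : 1 ≤ n) (x : ℝ) :
    (3 * (n : ℝ) - 1) * x * pAlp (n - 1) x =
      2 * (n : ℝ) * qAlp n x + (2 * (n : ℝ) - 1) * qAlp (n - 1) x := by
  obtain ⟨m, rfl⟩ : ∃ m, n = m + 1 := ⟨n - 1, by omega⟩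
  have hq : qAlp m x = ∑ k ∈ Finset.range (m + 1 + 1),
      (m.choose k : ℝ) * (poch (((k : ℝ) + 1) / 2) m / (m.factorial : ℝ)) *
        (-1) ^ (m - k) * x ^ k := by
    rw [Finset.sum_range_succ]
    simp [qAlp]
  have hf : (m.factorial : ℝ) ≠ 0 := by exact_mod_cast m.factorial_ne_zero
  have hm : (m : ℝ) + 1 ≠ 0 := by positivity
  rw [Nat.add_sub_cancel, hq, qAlp, pAlp, Finset.mul_sum, Finset.mul_sum, Finset.mul_sum,
    ← Finset.sum_add_distrib, Finset.sum_range_succ' _ (m + 1)]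
  have h0 : ∀ A B C : ℝ, A = B → C = 0 → A = B + C := by
    intro A B C h1 h2; rw [h1, h2, add_zero]
  apply h0
  · apply Finset.sum_congr rfl
    intro j hj
    have hj' : j ≤ m := by simpa [Nat.lt_succ_iff] using hj
    have ha : (((j + 1 : ℕ) : ℝ) + 1) / 2 = (j : ℝ) / 2 + 1 := by push_cast; ring
    rw [ha, poch_succ_aux, Nat.factorial_succ, Nat.choose_succ_succ, Nat.add_sub_add_right]
    have hc : (m.choose (j + 1) : ℝ) * (j + 1) = m.choose j * ((m : ℝ) - j) := by
      have := Nat.choose_succ_right_eq m j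
      rw [← Nat.cast_sub hj']
      exact_mod_cast this
    have hs : (m.choose (j + 1) : ℝ) * (-1) ^ (m - (j + 1))
        = - (m.choose (j + 1) : ℝ) * (-1) ^ (m - j) := by
      rcases hj'.eq_or_lt with h | h
      · subst h; simp
      · rw [show m - j = (m - (j + 1)) + 1 by omega, pow_succ]; ring
    generalize poch ((j : ℝ) / 2 + 1) m = P
    rw [mul_right_comm (m.choose (j + 1) : ℝ), hs]
    generalize (-1 : ℝ) ^ (m - j) = s
    push_cast
    field_simp
    linear_combination (-(x * x ^ j * P * s)) * hc
  · rw [poch_succ_aux, Nat.factorial_succ]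
    push_cast
    simp only [Nat.choose_zero_right, Nat.sub_zero, pow_succ]
    push_cast
    field_simp
    ring
end

section
/- Characterization of the last Alpert multiwavelet f_n: let n ≥ 1 and suppose f: ℝ → ℝ vanishes outside [−1,1], there is a polynomial P of degree at most n−1 with f(x) = P(x) for all x ∈ (0,1), f(−x) = −f(x) for all x ∈ (0,1) (odd symmetry), ∫_{−1}^1 f(x)·x^i dx = 0 for all integers 0 ≤ i ≤ 2n−2, and ∫_{−1}^1 f(x)² dx = 1. Then there is a real constant c with P = c·p_{n−1} and 2·c²·∫₀¹ p_{n−1}(x)² dx = 1. -/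
open MeasureTheory intervalIntegral Polynomial

lemma even_int (g A : ℝ → ℝ) (hA : Continuous A)
    (h1 : ∀ x ∈ Set.Ioo (0 : ℝ) 1, g x = A x)
    (h2 : ∀ x ∈ Set.Ioo (0 : ℝ) 1, g (-x) = g x) :
    ∫ x in (-1 : ℝ)..1, g x = 2 * ∫ x in (0 : ℝ)..1, A x := by
  have e1 : Set.EqOn A g (Set.uIoo 0 1) := by
    intro x hx
    rw [Set.uIoo_of_le zero_le_one] at hx
    exact (h1 x hx).symm
  have e2 : Set.EqOn (fun x => A (-x)) g (Set.uIoo (-1) 0) := by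
    intro x hx
    rw [Set.uIoo_of_le (by norm_num)] at hx
    have hx' : -x ∈ Set.Ioo (0:ℝ) 1 := ⟨by linarith [hx.2], by linarith [hx.1]⟩
    have := h2 _ hx'
    rw [neg_neg] at this
    simp only
    rw [this, h1 _ hx']
  have i1 : IntervalIntegrable g volume 0 1 :=
    (hA.intervalIntegrable 0 1).congr_uIoo e1
  have i2 : IntervalIntegrable g volume (-1) 0 :=
    ((hA.comp continuous_neg).intervalIntegrable (-1) 0).congr_uIoo e2
  rw [← integral_add_adjacent_intervals i2 i1, ← integral_congr_uIoo e1, ← integral_congr_uIoo e2,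
    intervalIntegral.integral_comp_neg]
  simp
  ring

lemma prod_neg_fac (k : ℕ) : ∏ l ∈ Finset.range k, ((l : ℝ) - k) = (-1) ^ k * k.factorial := by
  rw [← Finset.prod_range_reflect, ← Finset.prod_range_add_one_eq_factorial]
  push_cast
  have hcst : ((-1 : ℝ)) ^ k = ∏ _j ∈ Finset.range k, (-1 : ℝ) := by simp
  rw [hcst, ← Finset.prod_mul_distrib]
  apply Finset.prod_congr rfl
  intro j hj
  have := Finset.mem_range.1 hj
  have h : ((k - 1 - j : ℕ) : ℝ) = k - 1 - j := by
    rw [Nat.sub_sub, Nat.cast_sub (by omega)]; push_cast; ring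
  rw [h]; ring

lemma prod_erase_fac (k r : ℕ) : ∏ l ∈ (Finset.range (k + r + 1)).erase k, ((l : ℝ) - k)
    = (-1) ^ k * k.factorial * r.factorial := by
  induction r with
  | zero =>
    have : (Finset.range (k + 0 + 1)).erase k = Finset.range k := by
      ext x; simp; omega
    rw [this, prod_neg_fac]; simp
  | succ r ih =>
    have : (Finset.range (k + (r + 1) + 1)).erase k
        = insert (k + r + 1) ((Finset.range (k + r + 1)).erase k) := by
      ext x; simp; omega
    rw [this, Finset.prod_insert (by simp), ih, Nat.factorial_succ]
    push_cast; ring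

lemma poch_prod (a : ℝ) (m : ℕ) : poch a m = ∏ j ∈ Finset.range m, (a + j) := by
  unfold poch
  induction m with
  | zero => simp
  | succ m ih => rw [ascPochhammer_succ_eval, ih, Finset.prod_range_succ]

lemma key (m : ℕ) (a : ℕ → ℝ)
    (h : ∀ j < m, ∑ k ∈ Finset.range (m + 1), a k / ((k : ℝ) + (2 * j + 2)) = 0) :
    ∃ c : ℝ, ∀ k ∈ Finset.range (m + 1),
      a k = c * ((m.choose k : ℝ) * (poch ((k : ℝ) / 2 + 1) m / (m.factorial : ℝ))
        * (-1) ^ (m - k)) := by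
  let N : ℝ[X] := ∑ k ∈ Finset.range (m + 1),
    C (a k) * ∏ l ∈ (Finset.range (m + 1)).erase k, (X + C (l : ℝ))
  let D : ℝ[X] := ∏ j ∈ Finset.range m, (X - C (2 * (j : ℝ) + 2))
  have hDm : D.Monic := monic_prod_of_monic _ _ fun j _ => monic_X_sub_C _
  have hDd : D.natDegree = m := by
    simp only [D]; rw [natDegree_prod_of_monic _ _ fun j _ => monic_X_sub_C _]; simp only [natDegree_X_sub_C]; simp
  have hNd : N.natDegree ≤ m := by
    apply natDegree_sum_le_of_forall_le
    intro k hk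
    refine (natDegree_C_mul_le _ _).trans ?_
    rw [natDegree_prod_of_monic _ _ fun j _ => monic_X_add_C _]
    simp only [natDegree_X_add_C]
    simp [Finset.card_erase_of_mem hk]
  have hroot : ∀ j < m, N.IsRoot (2 * (j : ℝ) + 2) := by
    intro j hj
    have : N.eval (2 * (j : ℝ) + 2) = (∏ l ∈ Finset.range (m + 1), ((l : ℝ) + (2 * j + 2))) *
        ∑ k ∈ Finset.range (m + 1), a k / ((k : ℝ) + (2 * j + 2)) := by
      simp only [N, eval_finsetSum, eval_mul, eval_C, eval_prod, eval_add, eval_X, Finset.mul_sum]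
      apply Finset.sum_congr rfl
      intro k hk
      rw [← Finset.mul_prod_erase _ _ hk]
      have : (k : ℝ) + (2 * j + 2) ≠ 0 := by positivity
      simp only [add_comm (2 * (j : ℝ) + 2)]
      field_simp
    rw [IsRoot, this, h j hj, mul_zero]
  have hdvd : D ∣ N := by
    apply Finset.prod_dvd_of_coprime
    · intro i _ j _ hij
      apply isCoprime_X_sub_C_of_isUnit_sub
      rw [isUnit_iff_ne_zero]
      intro h0
      apply hij
      have : (i : ℝ) = j := by linarith
      exact_mod_cast this
    · intro j hj
      exact dvd_iff_isRoot.2 (hroot j (Finset.mem_range.1 hj))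
  obtain ⟨c, hc⟩ : ∃ c : ℝ, N = D * C c := by
    obtain ⟨q, hq⟩ := hdvd
    by_cases hq0 : q = 0
    · exact ⟨0, by rw [hq, hq0]; simp⟩
    have : N.natDegree = m + q.natDegree := by
      rw [hq, hDm.natDegree_mul' hq0, hDd]
    refine ⟨q.coeff 0, ?_⟩
    rw [← eq_C_of_natDegree_eq_zero (by omega), hq]
  refine ⟨c * 2 ^ m, fun k hk => ?_⟩
  obtain ⟨r, rfl⟩ : ∃ r, m = k + r := ⟨m - k, by have := Finset.mem_range.1 hk; omega⟩
  have h1 : N.eval (-(k : ℝ)) = a k * ((-1) ^ k * k.factorial * r.factorial) := by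
    simp only [N, eval_finsetSum, eval_mul, eval_C, eval_prod, eval_add, eval_X]
    rw [Finset.sum_eq_single_of_mem k hk]
    · rw [← prod_erase_fac]
      congr 1
      apply Finset.prod_congr rfl
      intro l _; ring
    · intro b hb hbk
      rw [Finset.prod_eq_zero (i := k) (by simp [Ne.symm hbk])]
      · simp
      · simp
  have h2 : D.eval (-(k : ℝ)) = (-2) ^ (k + r) * poch ((k : ℝ) / 2 + 1) (k + r) := by
    simp only [D, eval_prod, eval_sub, eval_X, eval_C]
    rw [poch_prod]
    have hcst : ((-2 : ℝ)) ^ (k + r) = ∏ _j ∈ Finset.range (k + r), (-2 : ℝ) := by simp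
    rw [hcst, ← Finset.prod_mul_distrib]
    apply Finset.prod_congr rfl
    intro l _; ring
  rw [hc, eval_mul, eval_C, h2] at h1
  have h3 : (((k + r).choose k : ℕ) : ℝ) = (k + r).factorial / (k.factorial * r.factorial) := by
    rw [Nat.choose_symm_add, Nat.add_choose, Nat.cast_div (Nat.factorial_mul_factorial_dvd_factorial_add k r)]
    · push_cast; rfl
    · positivity
  rw [h3, Nat.add_sub_cancel_left]
  have hk0 : (k.factorial : ℝ) ≠ 0 := by positivity
  have hr0 : (r.factorial : ℝ) ≠ 0 := by positivity
  have hkr0 : ((k + r).factorial : ℝ) ≠ 0 := by positivity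
  have hs : ((-1 : ℝ) ^ k) * (-1) ^ k = 1 := by rw [← mul_pow]; simp
  have h4 : a k * (k.factorial * r.factorial)
      = c * 2 ^ (k + r) * poch ((k : ℝ) / 2 + 1) (k + r) * (-1) ^ r := by
    have e : (-2 : ℝ) ^ (k + r) = (-1) ^ k * (-1) ^ r * 2 ^ (k + r) := by
      rw [← pow_add, ← mul_pow]; norm_num
    rw [e] at h1
    calc a k * (k.factorial * r.factorial)
        = (-1) ^ k * (a k * ((-1) ^ k * k.factorial * r.factorial)) := by
          linear_combination (-(a k * (k.factorial * r.factorial))) * hs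
      _ = _ := by
          rw [← h1]
          linear_combination (c * 2 ^ (k + r) * poch ((k : ℝ) / 2 + 1) (k + r) * (-1) ^ r) * hs
  generalize poch ((k : ℝ) / 2 + 1) (k + r) = q at h4 ⊢
  field_simp
  linear_combination h4

/-- Characterization of the last Alpert multiwavelet `f_n`: any function supported on `[-1,1]`
that is a polynomial of degree `≤ n-1` on `(0,1)`, odd, with vanishing moments of order
`≤ 2n-2` and unit `L²`-norm, is proportional to `p_{n-1}` on `(0,1)`, with the
normalization `2 c² ∫₀¹ p_{n-1}² = 1`. -/
theorem alpert_last (n : ℕ) (hn : 1 ≤ n) (f : ℝ → ℝ) (P : Polynomial ℝ)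
    (hPdeg : P.degree ≤ ((n - 1 : ℕ) : WithBot ℕ))
    (hsupp : ∀ x, x ∉ Set.Icc (-1 : ℝ) 1 → f x = 0)
    (hfP : ∀ x ∈ Set.Ioo (0 : ℝ) 1, f x = P.eval x)
    (hodd : ∀ x ∈ Set.Ioo (0 : ℝ) 1, f (-x) = -f x)
    (hmom : ∀ i : ℕ, i ≤ 2 * n - 2 → ∫ x in (-1 : ℝ)..1, f x * x ^ i = 0)
    (hnorm : ∫ x in (-1 : ℝ)..1, (f x) ^ 2 = 1) :
    ∃ c : ℝ, (∀ x, P.eval x = c * pAlp (n - 1) x) ∧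
      2 * c ^ 2 * ∫ x in (0 : ℝ)..1, (pAlp (n - 1) x) ^ 2 = 1 := by
  obtain ⟨m, rfl⟩ : ∃ m, n = m + 1 := ⟨n - 1, by omega⟩
  simp only [Nat.add_sub_cancel] at hPdeg ⊢
  have hnd : P.natDegree < m + 1 := Nat.lt_succ_of_le (natDegree_le_iff_degree_le.2 hPdeg)
  have hev : ∀ x, P.eval x = ∑ k ∈ Finset.range (m + 1), P.coeff k * x ^ k :=
    fun x => eval_eq_sum_range' hnd x
  have hz : ∀ j < m, ∑ k ∈ Finset.range (m + 1), P.coeff k / ((k : ℝ) + (2 * j + 2)) = 0 := by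
    intro j hj
    have h1 := hmom (2 * j + 1) (by omega)
    rw [even_int _ (fun x => P.eval x * x ^ (2 * j + 1)) (by fun_prop)
      (fun x hx => by rw [hfP x hx])
      (fun x hx => by rw [hodd x hx, Odd.neg_pow ⟨j, rfl⟩]; ring)] at h1
    have h2 : ∫ x in (0 : ℝ)..1, P.eval x * x ^ (2 * j + 1)
        = ∑ k ∈ Finset.range (m + 1), P.coeff k / ((k : ℝ) + (2 * j + 2)) := by
      have : ∀ x : ℝ, P.eval x * x ^ (2 * j + 1)
          = ∑ k ∈ Finset.range (m + 1), P.coeff k * x ^ (k + (2 * j + 1)) := by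
        intro x
        rw [hev, Finset.sum_mul]
        apply Finset.sum_congr rfl
        intro k _; ring
      simp only [this]
      rw [intervalIntegral.integral_finsetSum
        (fun k _ => Continuous.intervalIntegrable (by fun_prop) _ _)]
      apply Finset.sum_congr rfl
      intro k _
      rw [intervalIntegral.integral_const_mul, integral_pow]
      push_cast
      simp
      rw [div_eq_mul_inv]; congr 2; ring
    rw [← h2]; linarith
  obtain ⟨c, hc⟩ := key m P.coeff hz
  have hP : ∀ x, P.eval x = c * pAlp m x := by
    intro x
    rw [hev, pAlp, Finset.mul_sum]
    apply Finset.sum_congr rfl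
    intro k hk
    rw [hc k hk]; ring
  refine ⟨c, hP, ?_⟩
  rw [even_int _ (fun x => (P.eval x) ^ 2) (by fun_prop)
      (fun x hx => by rw [hfP x hx])
      (fun x hx => by rw [hodd x hx]; ring)] at hnorm
  simp only [hP, mul_pow] at hnorm
  rw [intervalIntegral.integral_const_mul] at hnorm
  linarith
end

section
/- Orthogonality of the explicit diagonal type II Legendre-Angelesco polynomial: for every natural number n, the even polynomial P(x) = ∑_{k=0}^n (n choose k) · (n+2k choose 2k) · (−1)^{n−k} · x^{2k} has leading coefficient (3n)!/(n!·(2n)!) (so that (n!·(2n)!/(3n)!)·P is monic of degree 2n) and satisfies ∫₀¹ P(x)·x^k dx = 0 and ∫_{−1}^0 P(x)·x^k dx = 0 for every integer k with 0 ≤ k ≤ n−1. -/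
open MeasureTheory intervalIntegral Polynomial

lemma aux_choose (n j : ℕ) : ((n + 2 * j).choose (2 * j) : ℝ) =
    (∏ i ∈ Finset.range n, (2 * (j : ℝ) + (i + 1))) / (n.factorial : ℝ) := by
  have h := Nat.ascFactorial_eq_factorial_mul_choose (2 * j) n
  rw [Nat.ascFactorial_eq_prod_range] at h
  have h2 : (n + 2 * j).choose (2 * j) = (2 * j + n).choose n := by
    rw [add_comm n, Nat.choose_symm_add]
  have h3 : (∏ i ∈ Finset.range n, (2 * (j : ℝ) + (i + 1))) =
      (n.factorial : ℝ) * ((2 * j + n).choose n : ℝ) := by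
    rw [← Nat.cast_mul, ← h]
    push_cast
    exact Finset.prod_congr rfl fun i _ => by ring
  have hn : (n.factorial : ℝ) ≠ 0 := by exact_mod_cast n.factorial_ne_zero
  rw [h2, h3]
  field_simp

lemma aux_sum (n k : ℕ) (hk : k < n) :
    ∑ j ∈ Finset.range (n + 1),
      ((n.choose j : ℝ) * ((n + 2 * j).choose (2 * j) : ℝ) * (-1) ^ (n - j)) *
        (1 / ((2 * j + k : ℕ) + 1 : ℝ)) = 0 := by
  set Q : Polynomial ℝ := ∏ i ∈ (Finset.range n).erase k, (C 2 * X + C ((i : ℝ) + 1)) with hQ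
  have hdeg : Q.natDegree < n := by
    refine lt_of_le_of_lt (Polynomial.natDegree_prod_le _ _) ?_
    refine lt_of_le_of_lt (Finset.sum_le_card_nsmul _ _ 1 fun i _ => natDegree_linear_le) ?_
    rw [Finset.card_erase_of_mem (Finset.mem_range.2 hk)]
    simp
    omega
  have h := congrFun (Polynomial.fwdDiff_iter_eq_zero_of_degree_lt hdeg) 0
  rw [fwdDiff_iter_eq_sum_shift] at h
  have h2 : (1 / (n.factorial : ℝ)) * 0 = 0 := mul_zero _
  rw [← h2]
  rw [Pi.zero_apply] at h
  rw [← h, Finset.mul_sum]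
  refine Finset.sum_congr rfl fun j _ => ?_
  rw [aux_choose, ← Finset.mul_prod_erase _ _ (Finset.mem_range.2 hk)]
  have he : Q.eval (0 + j • (1 : ℝ)) =
      ∏ i ∈ (Finset.range n).erase k, (2 * (j : ℝ) + (i + 1)) := by
    simp [hQ, eval_prod]
  rw [he, zsmul_eq_mul]
  have hn : (n.factorial : ℝ) ≠ 0 := by exact_mod_cast n.factorial_ne_zero
  have hp : (2 * (j : ℝ) + (k + 1)) ≠ 0 := by positivity
  have hp2 : ((2 * j + k : ℕ) + 1 : ℝ) = 2 * (j : ℝ) + (k + 1) := by push_cast; ring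
  rw [hp2]
  push_cast
  field_simp

/-- Orthogonality of the explicit diagonal type II Legendre-Angelesco polynomial: the even
polynomial `P(x) = ∑_{k=0}^n (n choose k)(n+2k choose 2k)(-1)^{n-k} x^{2k}` has leading
coefficient `(3n)!/(n!(2n)!)` and is orthogonal on `[0,1]` and on `[-1,0]` to all powers
`x^k` with `k ≤ n-1`. -/
theorem typeII_diagonal_orthogonality (n : ℕ) (P : Polynomial ℝ)
    (hP : P = ∑ k ∈ Finset.range (n + 1),
      Polynomial.C ((n.choose k : ℝ) * ((n + 2 * k).choose (2 * k) : ℝ) * (-1) ^ (n - k)) *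
        Polynomial.X ^ (2 * k)) :
    P.coeff (2 * n) = ((3 * n).factorial : ℝ) / ((n.factorial : ℝ) * ((2 * n).factorial : ℝ)) ∧
    ∀ k : ℕ, k < n →
      (∫ x in (0 : ℝ)..1, P.eval x * x ^ k = 0) ∧
      (∫ x in (-1 : ℝ)..0, P.eval x * x ^ k = 0) := by
  have hint : ∀ (a b : ℝ) (k : ℕ), ∫ x in a..b, P.eval x * x ^ k =
      ∑ j ∈ Finset.range (n + 1),
      ((n.choose j : ℝ) * ((n + 2 * j).choose (2 * j) : ℝ) * (-1) ^ (n - j)) *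
        ((b ^ (2 * j + k + 1) - a ^ (2 * j + k + 1)) / ((2 * j + k : ℕ) + 1 : ℝ)) := by
    intro a b k
    have h1 : ∀ x : ℝ, P.eval x * x ^ k = ∑ j ∈ Finset.range (n + 1),
      ((n.choose j : ℝ) * ((n + 2 * j).choose (2 * j) : ℝ) * (-1) ^ (n - j)) *
        x ^ (2 * j + k) := by
      intro x
      rw [hP, eval_finsetSum, Finset.sum_mul]
      refine Finset.sum_congr rfl fun j _ => ?_
      rw [eval_mul, eval_C, eval_pow, eval_X]
      ring
    simp_rw [h1]
    rw [intervalIntegral.integral_finsetSum]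
    · refine Finset.sum_congr rfl fun j _ => ?_
      rw [intervalIntegral.integral_const_mul, integral_pow]
    · intro j _
      exact Continuous.intervalIntegrable (by fun_prop) _ _
  refine ⟨?_, fun k hk => ⟨?_, ?_⟩⟩
  · rw [hP, finsetSum_coeff, Finset.sum_eq_single n]
    · rw [coeff_C_mul, coeff_X_pow_self, Nat.sub_self, Nat.choose_self,
        Nat.cast_choose ℝ (by omega : 2 * n ≤ n + 2 * n),
        show n + 2 * n = 3 * n by ring, show 3 * n - 2 * n = n by omega]
      rw [mul_comm (n.factorial : ℝ)]
      simp
    · intro j _ hj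
      rw [coeff_C_mul, coeff_X_pow, if_neg (by omega), mul_zero]
    · intro h
      simp at h
  · rw [hint]
    refine Eq.trans ?_ (aux_sum n k hk)
    refine Finset.sum_congr rfl fun j _ => ?_
    simp
  · rw [hint]
    refine Eq.trans ?_ ((congrArg (fun t => (-1 : ℝ) ^ k * t) (aux_sum n k hk)).trans (mul_zero _))
    simp only [Finset.mul_sum]
    refine Finset.sum_congr rfl fun j _ => ?_
    have : (-1 : ℝ) ^ (2 * j + k + 1) = - (-1) ^ k := by
      rw [pow_succ, pow_add, pow_mul]; simp
    rw [this, zero_pow (by omega)]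
    ring
end
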